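/- Let p₋₂, p₋₂', p₋₁, p₋₁', p₀, p₀', q₋₁, q₋₁', q₀, q₀' be complex numbers with p₋₂ ≠ 0, p₋₂' ≠ 0, q₋₁ ≠ 0, q₋₁' ≠ 0, and let a, a', b, b' : ℕ → ℂ satisfy a_{n+1} = p₋₂·n² + p₋₁·n + p₀ + O(n^{−1}), a'_n = p₋₂'·n² + p₋₁'·n + p₀' + O(n^{−1}), b_{n+1} = q₋₁·n + q₀ + O(n^{−1}), b'_n = q₋₁'·n + q₀' + O(n^{−1}) (the class D̃₂₁). Let u : ℕ → ℂ satisfy, for all n ≥ 1, b_{n+1} + u_{n+1} ≠ 0, a_{n+1} + b'_n·b_{n+1} + b'_n·u_{n+1} ≠ 0, and the tail relation u_n = a'_n/(b'_n + a_{n+1}/(b_{n+1} + u_{n+1})); suppose there are complex τ₋₂, τ₀, τ₂ with q₋₁'·τ₋₂² + (p₋₂ − p₋₂' + q₋₁'·q₋₁)·τ₋₂ − p₋₂'·q₋₁ = 0, (p₋₂ + q₋₁·q₋₁' + q₋₁'·τ₋₂)² ≠ p₋₂·p₋₂', and u_n = τ₋₂·n + τ₀ + τ₂·n^{−1} + O(n^{−2}).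 Let m ≥ 2 be an integer, c, d ∈ ℂ, and let u' : ℕ → ℂ satisfy a_{n+1} + b'_n·b_{n+1} + b'_n·u'_{n+1} ≠ 0 for all n ≥ 1 and u'_n − u_n = c·n^{−m/2} + d·n^{−m/2−1} + O(n^{−m/2−2}). Define u⁺_n := a'_n/(b'_n + a_{n+1}/(b_{n+1} + u'_{n+1})), ψ'_n := a'_n·a_{n+1}/(a_{n+1} + b'_n·b_{n+1} + b'_n·u'_{n+1})², and φ'_n := 1 + m/(2n). Then there exists N such that φ'_n − ψ'_n ≠ 0 for all n ≥ N, and the sequence u''_n := (φ'_n·u⁺_n − ψ'_n·u'_n)/(φ'_n − ψ'_n) satisfies u''_n − u_n = O(n^{−m/2−2}) as n → ∞. -/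

import Mathlib

open Asymptotics Filter

/-- `n^s` as a complex number, for `n : ℕ` and a real exponent `s`. -/
noncomputable def rpowC (s : ℝ) (n : ℕ) : ℂ := (((n : ℝ) ^ s : ℝ) : ℂ)

/-!
Write `T_n w = a'_n / (b'_n + a_{n+1} / (b_{n+1} + w))`, so that `u_n = T_n u_{n+1}`, and let
`e_n = u'_n - u_n`. A Möbius map satisfies `T w - T v = ψ ((w - v) + κ (w - v) ^ 2)` exactly, where
`ψ` is its derivative at `w`; here `κ_n = O(n⁻¹)`. Hence the error of `u''_n` is
`ψ / (φ - ψ) * (φ e_{n+1} - e_n + φ κ e_{n+1} ^ 2)`. Since `n ^ (-s)` is an approximate solution of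
`(1 + s / n) f (n + 1) = f n`, the factor `φ_n = 1 + s / n` makes the linear part two orders smaller
than `e_n`; the quadratic part has order `-2 s - 1 ≤ -s - 2`. Finally `ψ_n` tends to the multiplier
of the limiting Möbius map at its fixed point `τ`, and this multiplier differs from `1`.
-/

open Topology

/-! ### Orders of growth -/

theorem isBigO_one_add_rpow_sub (t : ℝ) :
    (fun x : ℝ => (1 + x) ^ t - 1 - t * x) =O[𝓝 0] fun x => x ^ 2 := by
  have h := (Real.one_add_rpow_hasFPowerSeriesAt_zero (a := t)).isBigO_sub_partialSum_pow 2
  simp only [FormalMultilinearSeries.partialSum, binomialSeries,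
    FormalMultilinearSeries.apply_eq_prod_smul_coeff, FormalMultilinearSeries.coeff_ofScalars,
    Finset.prod_const, Finset.card_univ, Fintype.card_fin, Finset.sum_range_succ,
    Finset.range_zero, Finset.sum_empty, Ring.choose_zero_right', Ring.choose_one_right',
    smul_eq_mul, zero_add, pow_zero, mul_one, pow_one, Real.norm_eq_abs, sq_abs] at h
  exact h.congr_left fun x => by ring

theorem isBigO_add_one_rpow_sub (t : ℝ) :
    (fun n : ℕ => ((n : ℝ) + 1) ^ t - (n : ℝ) ^ t - t * (n : ℝ) ^ (t - 1))
      =O[atTop] fun n : ℕ => (n : ℝ) ^ (t - 2) := by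
  have hinv : Tendsto (fun n : ℕ => (n : ℝ)⁻¹) atTop (𝓝 0) := tendsto_inv_atTop_nhds_zero_nat
  refine ((isBigO_refl (fun n : ℕ => (n : ℝ) ^ t) atTop).mul
    ((isBigO_one_add_rpow_sub t).comp_tendsto hinv)).congr' ?_ ?_
  all_goals
    filter_upwards [eventually_gt_atTop 0] with n hn
    have hn' : (0 : ℝ) < n := Nat.cast_pos.2 hn
  · have hsplit : ((n : ℝ) + 1) ^ t = (n : ℝ) ^ t * (1 + (n : ℝ)⁻¹) ^ t := by
      rw [← Real.mul_rpow hn'.le (by positivity), mul_add, mul_inv_cancel₀ hn'.ne', mul_one]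
    simp only [Function.comp_apply, hsplit, Real.rpow_sub_one hn'.ne']
    ring
  · simp only [Function.comp_apply, Real.rpow_sub hn', Real.rpow_two]
    ring

theorem natCast_rpow_isBigO_of_le {s t : ℝ} (h : s ≤ t) :
    (fun n : ℕ => (n : ℝ) ^ s) =O[atTop] fun n : ℕ => (n : ℝ) ^ t := by
  refine Eventually.isBigO ?_
  filter_upwards [eventually_ge_atTop 1] with n hn
  rw [Real.norm_of_nonneg (by positivity)]
  exact Real.rpow_le_rpow_of_exponent_le (Nat.one_le_cast.2 hn) h

theorem tendsto_zero_of_isBigO_natCast_rpow {f : ℕ → ℂ} {t : ℝ} (ht : t < 0)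
    (hf : f =O[atTop] fun n : ℕ => (n : ℝ) ^ t) : Tendsto f atTop (𝓝 0) := by
  refine hf.trans_tendsto ?_
  simpa only [neg_neg, Function.comp_def] using
    (tendsto_rpow_neg_atTop (neg_pos.2 ht)).comp tendsto_natCast_atTop_atTop

theorem isBigO_comp_succ_of_isBigO_natCast_rpow {f : ℕ → ℂ} {t : ℝ}
    (hf : f =O[atTop] fun n : ℕ => (n : ℝ) ^ t) :
    (fun n => f (n + 1)) =O[atTop] fun n : ℕ => (n : ℝ) ^ t := by
  have hsucc : (fun n : ℕ => ((n + 1 : ℕ) : ℝ)) ~[atTop] fun n : ℕ => (n : ℝ) := by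
    simp only [Nat.cast_succ]
    exact IsEquivalent.refl.add_isLittleO
      (isLittleO_const_left.2 (Or.inr (tendsto_norm_atTop_atTop.comp tendsto_natCast_atTop_atTop)))
  exact (hf.comp_tendsto (tendsto_add_atTop_nat 1)).trans
    (hsucc.rpow (r := t) fun _ => Nat.cast_nonneg _).isBigO

theorem isBigO_rpowC (t : ℝ) : rpowC t =O[atTop] fun n : ℕ => (n : ℝ) ^ t :=
  isBigO_of_le _ fun _ => (Complex.norm_real _).le

theorem isBigO_rpowC_succ_sub (t : ℝ) :
    (fun n : ℕ => rpowC t (n + 1) - rpowC t n - t * rpowC (t - 1) n)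
      =O[atTop] fun n : ℕ => (n : ℝ) ^ (t - 2) := by
  refine (isBigO_add_one_rpow_sub t).norm_left.congr_left ?_ |>.of_norm_left
  intro n
  rw [← Complex.norm_real]
  simp only [rpowC]
  push_cast
  rfl

theorem rpowC_sub_one {n : ℕ} (hn : n ≠ 0) (t : ℝ) : rpowC (t - 1) n = rpowC t n / n := by
  simp only [rpowC, Real.rpow_sub_one (Nat.cast_ne_zero.2 hn), Complex.ofReal_div,
    Complex.ofReal_natCast]

theorem isBigO_natCast_inv :
    (fun n : ℕ => (n : ℂ)⁻¹) =O[atTop] fun n : ℕ => (n : ℝ) ^ (-1 : ℝ) :=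
  isBigO_of_le _ fun n => by simp [Real.rpow_neg_one]

theorem isBigO_mul_natCast_inv {f : ℕ → ℂ} {t : ℝ} (hf : f =O[atTop] fun n : ℕ => (n : ℝ) ^ t) :
    (fun n => f n * (n : ℂ)⁻¹) =O[atTop] fun n : ℕ => (n : ℝ) ^ (t - 1) :=
  IsBigO.mul_atTop_rpow_natCast_of_isBigO_rpow _ _ _ hf isBigO_natCast_inv (by linarith)

theorem tendsto_div_of_isBigO_sub_linear {f : ℕ → ℂ} {q r : ℂ} {t : ℝ} (ht : t < 1)
    (hf : (fun n : ℕ => f n - (q * n + r)) =O[atTop] fun n : ℕ => (n : ℝ) ^ t) :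
    Tendsto (fun n => f n / n) atTop (𝓝 q) := by
  have hinv : Tendsto (fun n : ℕ => (n : ℂ)⁻¹) atTop (𝓝 0) := tendsto_inv_atTop_nhds_zero_nat
  have hrem := tendsto_zero_of_isBigO_natCast_rpow (by linarith) (isBigO_mul_natCast_inv hf)
  have h := (hrem.add (hinv.const_mul r)).const_add q
  simp only [mul_zero, add_zero] at h
  refine h.congr' ?_
  filter_upwards [eventually_ne_atTop 0] with n hn
  have hn' : (n : ℂ) ≠ 0 := Nat.cast_ne_zero.2 hn
  field_simp
  ring

theorem tendsto_div_sq_of_isBigO_sub_quadratic {f : ℕ → ℂ} {p q r : ℂ} {t : ℝ} (ht : t < 2)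
    (hf : (fun n : ℕ => f n - (p * n ^ 2 + q * n + r)) =O[atTop] fun n : ℕ => (n : ℝ) ^ t) :
    Tendsto (fun n => f n / n ^ 2) atTop (𝓝 p) := by
  have hinv : Tendsto (fun n : ℕ => (n : ℂ)⁻¹) atTop (𝓝 0) := tendsto_inv_atTop_nhds_zero_nat
  have hrem := tendsto_zero_of_isBigO_natCast_rpow (by linarith)
    (isBigO_mul_natCast_inv (isBigO_mul_natCast_inv hf))
  have h := ((hrem.add ((hinv.pow 2).const_mul r)).add (hinv.const_mul q)).const_add p
  simp only [zero_pow two_ne_zero, mul_zero, add_zero] at h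
  refine h.congr' ?_
  filter_upwards [eventually_ne_atTop 0] with n hn
  have hn' : (n : ℂ) ≠ 0 := Nat.cast_ne_zero.2 hn
  field_simp
  ring

theorem tendsto_succ_div {f : ℕ → ℂ} {τ : ℂ} (hf : Tendsto (fun n => f n / n) atTop (𝓝 τ)) :
    Tendsto (fun n => f (n + 1) / n) atTop (𝓝 τ) := by
  have h := (hf.comp (tendsto_add_atTop_nat 1)).div (tendsto_natCast_div_add_atTop (1 : ℂ))
    one_ne_zero
  rw [div_one] at h
  refine h.congr fun n => ?_
  simp only [Pi.div_apply, Function.comp_apply, Nat.cast_succ]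
  exact div_div_div_cancel_right₀ n.cast_add_one_ne_zero _ _

/-! ### Compensating the shift of the index -/

/-- The factor `1 + s / n` by which a sequence of order `n ^ (-s)` has to be multiplied in order to
undo the shift `n ↦ n + 1` to first order; the `φ'_n` of the paper is `shiftFactor (m / 2) n`. -/
noncomputable def shiftFactor (s : ℂ) (n : ℕ) : ℂ := 1 + s / n

/-- The defect of `f` as a solution of the recurrence `(1 + s / n) * f (n + 1) = f n`. -/
noncomputable def shiftDefect (s : ℂ) (f : ℕ → ℂ) (n : ℕ) : ℂ :=
  shiftFactor s n * f (n + 1) - f n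

theorem tendsto_shiftFactor (s : ℂ) : Tendsto (shiftFactor s) atTop (𝓝 1) := by
  have h : Tendsto (fun n : ℕ => 1 + s / n) atTop (𝓝 (1 + 0)) :=
    (tendsto_const_div_atTop_nhds_zero_nat s).const_add 1
  rwa [add_zero] at h

theorem isBigO_shiftFactor_mul (s : ℂ) {f : ℕ → ℂ} {t : ℝ}
    (hf : f =O[atTop] fun n : ℕ => (n : ℝ) ^ t) :
    (fun n => shiftFactor s n * f n) =O[atTop] fun n : ℕ => (n : ℝ) ^ t := by
  simpa only [one_mul] using ((tendsto_shiftFactor s).isBigO_one ℝ).mul hf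

theorem isBigO_shiftDefect (s : ℂ) {f : ℕ → ℂ} {t : ℝ}
    (hf : f =O[atTop] fun n : ℕ => (n : ℝ) ^ t) :
    shiftDefect s f =O[atTop] fun n : ℕ => (n : ℝ) ^ t :=
  (isBigO_shiftFactor_mul s (isBigO_comp_succ_of_isBigO_natCast_rpow hf)).sub hf

theorem isBigO_shiftDefect_rpowC_sub (s : ℂ) (t : ℝ) :
    (fun n => shiftDefect s (rpowC t) n - (s + t) * rpowC (t - 1) n)
      =O[atTop] fun n : ℕ => (n : ℝ) ^ (t - 2) := by
  have hinv : (fun n : ℕ => rpowC (t - 1) n * (n : ℂ)⁻¹) =O[atTop]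
      fun n : ℕ => (n : ℝ) ^ (t - 2) := by
    simpa only [sub_sub, one_add_one_eq_two] using isBigO_mul_natCast_inv (isBigO_rpowC (t - 1))
  refine ((isBigO_shiftFactor_mul s (isBigO_rpowC_succ_sub t)).add
    (hinv.const_mul_left (s * t))).congr' ?_ EventuallyEq.rfl
  filter_upwards [eventually_ne_atTop 0] with n hn
  simp only [shiftDefect, shiftFactor, rpowC_sub_one hn]
  ring

theorem isBigO_shiftDefect_rpowC_neg (s : ℝ) :
    shiftDefect s (rpowC (-s)) =O[atTop] fun n : ℕ => (n : ℝ) ^ (-s - 2) := by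
  simpa only [Complex.ofReal_neg, add_neg_cancel, zero_mul, sub_zero] using
    isBigO_shiftDefect_rpowC_sub s (-s)

theorem isBigO_shiftDefect_rpowC (s : ℂ) (t : ℝ) :
    shiftDefect s (rpowC t) =O[atTop] fun n : ℕ => (n : ℝ) ^ (t - 1) := by
  have h := ((isBigO_shiftDefect_rpowC_sub s t).trans
    (natCast_rpow_isBigO_of_le (by linarith : t - 2 ≤ t - 1))).add
      ((isBigO_rpowC (t - 1)).const_mul_left (s + t))
  simpa only [sub_add_cancel] using h

theorem isBigO_shiftDefect_of_expansion {s : ℝ} {c d : ℂ} {e : ℕ → ℂ}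
    (he : (fun n => e n - (c * rpowC (-s) n + d * rpowC (-s - 1) n))
      =O[atTop] fun n : ℕ => (n : ℝ) ^ (-s - 2)) :
    shiftDefect s e =O[atTop] fun n : ℕ => (n : ℝ) ^ (-s - 2) := by
  have hd : shiftDefect s (rpowC (-s - 1)) =O[atTop] fun n : ℕ => (n : ℝ) ^ (-s - 2) := by
    simpa only [sub_sub, one_add_one_eq_two] using isBigO_shiftDefect_rpowC s (-s - 1)
  refine ((isBigO_shiftDefect s he).add (((isBigO_shiftDefect_rpowC_neg s).const_mul_left c).add
    (hd.const_mul_left d))).congr_left fun n => ?_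
  simp only [shiftDefect]
  ring

theorem isBigO_of_expansion {s : ℝ} {c d : ℂ} {e : ℕ → ℂ}
    (he : (fun n => e n - (c * rpowC (-s) n + d * rpowC (-s - 1) n))
      =O[atTop] fun n : ℕ => (n : ℝ) ^ (-s - 2)) :
    e =O[atTop] fun n : ℕ => (n : ℝ) ^ (-s) := by
  have hd := (isBigO_rpowC (-s - 1)).trans (natCast_rpow_isBigO_of_le (by linarith : _ ≤ -s))
  have h := (he.trans (natCast_rpow_isBigO_of_le (by linarith : _ ≤ -s))).add
    (((isBigO_rpowC (-s)).const_mul_left c).add (hd.const_mul_left d))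
  simpa only [sub_add_cancel] using h

/-! ### The accelerated sequence -/

/-- The combination of two approximations `x` and `y` which is exact whenever their errors are in
the ratio `ψ : φ`; the `u''_n` of the paper has `x = u⁺_n` and `y = u'_n`. -/
def accelerate {K : Type*} [Field K] (φ ψ x y : K) : K := (φ * x - ψ * y) / (φ - ψ)

theorem accelerate_sub {K : Type*} [Field K] {φ ψ x y z ε κ : K} (hφψ : φ - ψ ≠ 0)
    (hx : x - z = ψ * (ε + κ * ε ^ 2)) :
    accelerate φ ψ x y - z = ψ / (φ - ψ) * (φ * ε - (y - z) + φ * (κ * ε ^ 2)) := by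
  rw [accelerate, div_sub' hφψ, div_mul_eq_mul_div]
  congr 1
  linear_combination φ * hx

theorem eventually_shiftFactor_sub_ne_zero (s : ℂ) {ψ : ℕ → ℂ} {μ : ℂ}
    (hψ : Tendsto ψ atTop (𝓝 μ)) (hμ : μ ≠ 1) : ∀ᶠ n in atTop, shiftFactor s n - ψ n ≠ 0 :=
  ((tendsto_shiftFactor s).sub hψ).eventually_ne (sub_ne_zero.2 hμ.symm)

theorem isBigO_accelerate_sub {s : ℝ} (hs : 1 ≤ s) {c d μ : ℂ} {u v w ψ κ : ℕ → ℂ}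
    (hψ : Tendsto ψ atTop (𝓝 μ)) (hμ : μ ≠ 1)
    (hκ : κ =O[atTop] fun n : ℕ => (n : ℝ) ^ (-1 : ℝ))
    (hw : ∀ᶠ n in atTop, w n - u n
      = ψ n * ((v (n + 1) - u (n + 1)) + κ n * (v (n + 1) - u (n + 1)) ^ 2))
    (hv : (fun n => v n - u n - (c * rpowC (-s) n + d * rpowC (-s - 1) n))
      =O[atTop] fun n : ℕ => (n : ℝ) ^ (-s - 2)) :
    (fun n => accelerate (shiftFactor s n) (ψ n) (w n) (v n) - u n)
      =O[atTop] fun n : ℕ => (n : ℝ) ^ (-s - 2) := by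
  have hratio := (hψ.div ((tendsto_shiftFactor s).sub hψ) (sub_ne_zero.2 hμ.symm)).isBigO_one ℝ
  have hlinear := isBigO_shiftDefect_of_expansion hv
  have hsucc := isBigO_comp_succ_of_isBigO_natCast_rpow (isBigO_of_expansion hv)
  have hsq := IsBigO.mul_atTop_rpow_natCast_of_isBigO_rpow _ _ (-s - 1) hsucc hsucc (by linarith)
  have hquadratic := isBigO_shiftFactor_mul s
    (IsBigO.mul_atTop_rpow_natCast_of_isBigO_rpow _ _ (-s - 2) hκ hsq (by linarith))
  have h := hratio.mul (hlinear.add hquadratic)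
  simp only [one_mul] at h
  refine h.congr' ?_ EventuallyEq.rfl
  filter_upwards [hw, eventually_shiftFactor_sub_ne_zero s hψ hμ] with n hwn hn
  rw [accelerate_sub hn hwn]
  simp only [shiftDefect, Pi.mul_apply, Pi.div_apply, sq]

/-! ### The two-step tail map -/

section TailMap

variable {K : Type*} [Field K] {a a' b b' v w : K}

/-- The map `w ↦ a' / (b' + a / (b + w))` which recovers a tail of a two-variant continued fraction
from the tail two steps further on. -/
def tailMap (a a' b b' w : K) : K := a' / (b' + a / (b + w))

/-- The denominator of `tailMap` once the compound fraction is cleared. -/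
def tailDenom (a b b' w : K) : K := a + b' * b + b' * w

/-- The derivative of `tailMap` at `w`; the `ψ'_n` of the paper. -/
def tailSlope (a a' b b' w : K) : K := a' * a / tailDenom a b b' w ^ 2

theorem tailMap_eq_div (hw : b + w ≠ 0) :
    tailMap a a' b b' w = a' * (b + w) / tailDenom a b b' w := by
  rw [tailMap, add_div' _ _ _ hw, div_div_eq_mul_div, tailDenom]
  ring

theorem tailMap_sub_tailMap (hv : b + v ≠ 0) (hw : b + w ≠ 0) (hDv : tailDenom a b b' v ≠ 0)
    (hDw : tailDenom a b b' w ≠ 0) :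
    tailMap a a' b b' w - tailMap a a' b b' v
      = tailSlope a a' b b' w * ((w - v) + b' / tailDenom a b b' v * (w - v) ^ 2) := by
  rw [tailMap_eq_div hv, tailMap_eq_div hw, tailSlope]
  field_simp
  simp only [tailDenom]
  ring

theorem add_ne_zero_of_quadratic {p p' q q' τ : K} (hp : p ≠ 0) (hq : q ≠ 0)
    (hτ : q' * τ ^ 2 + (p - p' + q' * q) * τ - p' * q = 0) : q + τ ≠ 0 := by
  intro h
  obtain rfl : τ = -q := by linear_combination h
  exact mul_ne_zero hp hq (by linear_combination -hτ)

theorem tailDenom_ne_zero_of_quadratic {p p' q q' τ : K} (hp : p ≠ 0) (hp' : p' ≠ 0) (hq : q ≠ 0)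
    (hτ : q' * τ ^ 2 + (p - p' + q' * q) * τ - p' * q = 0) : tailDenom p q q' τ ≠ 0 := by
  intro h
  rw [tailDenom] at h
  exact mul_ne_zero hp' (add_ne_zero_of_quadratic hp hq hτ) (by linear_combination τ * h - hτ)

theorem tailSlope_ne_one_of_sq_ne {p p' q q' τ : K} (hD : tailDenom p q q' τ ≠ 0)
    (h : tailDenom p q q' τ ^ 2 ≠ p * p') : tailSlope p p' q q' τ ≠ 1 := by
  rwa [tailSlope, Ne, div_eq_one_iff_eq (pow_ne_zero 2 hD), eq_comm, mul_comm]

theorem tailDenom_div_sq (x : K) :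
    tailDenom a b b' w / x ^ 2 = tailDenom (a / x ^ 2) (b / x) (b' / x) (w / x) := by
  simp only [tailDenom]
  ring

theorem tailSlope_div_sq {x : K} (hx : x ≠ 0) :
    tailSlope (a / x ^ 2) (a' / x ^ 2) (b / x) (b' / x) (w / x) = tailSlope a a' b b' w := by
  rw [tailSlope, ← tailDenom_div_sq, div_mul_div_comm, div_pow, ← pow_mul, ← pow_add,
    div_div_div_cancel_right₀ (pow_ne_zero _ hx), tailSlope]

end TailMap

section TailMapLimits

variable {p p' q q' τ : ℂ} {a a' b b' w : ℕ → ℂ}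

theorem tendsto_tailDenom_div_sq (ha : Tendsto (fun n => a n / n ^ 2) atTop (𝓝 p))
    (hb : Tendsto (fun n => b n / n) atTop (𝓝 q)) (hb' : Tendsto (fun n => b' n / n) atTop (𝓝 q'))
    (hw : Tendsto (fun n => w n / n) atTop (𝓝 τ)) :
    Tendsto (fun n => tailDenom (a n) (b n) (b' n) (w n) / n ^ 2) atTop
      (𝓝 (tailDenom p q q' τ)) := by
  simp only [tailDenom_div_sq]
  exact (ha.add (hb'.mul hb)).add (hb'.mul hw)

theorem tendsto_tailSlope (ha : Tendsto (fun n => a n / n ^ 2) atTop (𝓝 p))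
    (ha' : Tendsto (fun n => a' n / n ^ 2) atTop (𝓝 p'))
    (hb : Tendsto (fun n => b n / n) atTop (𝓝 q)) (hb' : Tendsto (fun n => b' n / n) atTop (𝓝 q'))
    (hw : Tendsto (fun n => w n / n) atTop (𝓝 τ)) (hD : tailDenom p q q' τ ≠ 0) :
    Tendsto (fun n => tailSlope (a n) (a' n) (b n) (b' n) (w n)) atTop
      (𝓝 (tailSlope p p' q q' τ)) := by
  have hden := tendsto_tailDenom_div_sq ha hb hb' hw
  simp only [tailDenom_div_sq] at hden
  refine ((ha'.mul ha).div (hden.pow 2) (pow_ne_zero 2 hD)).congr' ?_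
  filter_upwards [eventually_ne_atTop 0] with n hn
  exact tailSlope_div_sq (Nat.cast_ne_zero.2 hn)

theorem isBigO_div_tailDenom (ha : Tendsto (fun n => a n / n ^ 2) atTop (𝓝 p))
    (hb : Tendsto (fun n => b n / n) atTop (𝓝 q)) (hb' : Tendsto (fun n => b' n / n) atTop (𝓝 q'))
    (hw : Tendsto (fun n => w n / n) atTop (𝓝 τ)) (hD : tailDenom p q q' τ ≠ 0) :
    (fun n => b' n / tailDenom (a n) (b n) (b' n) (w n))
      =O[atTop] fun n : ℕ => (n : ℝ) ^ (-1 : ℝ) := by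
  have hquot := (hb'.div (tendsto_tailDenom_div_sq ha hb hb' hw) hD).isBigO_one ℝ
  have h := hquot.mul isBigO_natCast_inv
  simp only [one_mul] at h
  refine h.congr' ?_ EventuallyEq.rfl
  filter_upwards [eventually_ne_atTop 0] with n hn
  have hn' : (n : ℂ) ≠ 0 := Nat.cast_ne_zero.2 hn
  simp only [Pi.div_apply]
  generalize tailDenom (a n) (b n) (b' n) (w n) = D
  field_simp

theorem eventually_tailDenom_ne_zero (ha : Tendsto (fun n => a n / n ^ 2) atTop (𝓝 p))
    (hb : Tendsto (fun n => b n / n) atTop (𝓝 q)) (hb' : Tendsto (fun n => b' n / n) atTop (𝓝 q'))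
    (hw : Tendsto (fun n => w n / n) atTop (𝓝 τ)) (hD : tailDenom p q q' τ ≠ 0) :
    ∀ᶠ n in atTop, tailDenom (a n) (b n) (b' n) (w n) ≠ 0 :=
  ((tendsto_tailDenom_div_sq ha hb hb' hw).eventually_ne hD).mono fun _ h =>
    (div_ne_zero_iff.1 h).1

theorem eventually_add_ne_zero (hb : Tendsto (fun n => b n / n) atTop (𝓝 q))
    (hw : Tendsto (fun n => w n / n) atTop (𝓝 τ)) (hτ : q + τ ≠ 0) :
    ∀ᶠ n in atTop, b n + w n ≠ 0 := by
  refine ((hb.add hw).eventually_ne hτ).mono fun n hn => ?_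
  rw [← add_div] at hn
  exact (div_ne_zero_iff.1 hn).1

end TailMapLimits

theorem stmt19_general {p p' q q' τ : ℂ} {a a' b b' u u' : ℕ → ℂ}
    (ha : Tendsto (fun n => a (n + 1) / n ^ 2) atTop (𝓝 p))
    (ha' : Tendsto (fun n => a' n / n ^ 2) atTop (𝓝 p'))
    (hb : Tendsto (fun n => b (n + 1) / n) atTop (𝓝 q))
    (hb' : Tendsto (fun n => b' n / n) atTop (𝓝 q'))
    (hu : Tendsto (fun n => u n / n) atTop (𝓝 τ))
    (hτ : q + τ ≠ 0) (hD : tailDenom p q q' τ ≠ 0) (hμ : tailSlope p p' q q' τ ≠ 1)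
    (htail : ∀ᶠ n in atTop, u n = tailMap (a (n + 1)) (a' n) (b (n + 1)) (b' n) (u (n + 1)))
    {s : ℝ} (hs : 1 ≤ s) {c d : ℂ}
    (hu' : (fun n => u' n - u n - (c * rpowC (-s) n + d * rpowC (-s - 1) n))
      =O[atTop] fun n : ℕ => (n : ℝ) ^ (-s - 2)) :
    (∀ᶠ n in atTop, shiftFactor s n
      - tailSlope (a (n + 1)) (a' n) (b (n + 1)) (b' n) (u' (n + 1)) ≠ 0) ∧
    (fun n => accelerate (shiftFactor s n)
        (tailSlope (a (n + 1)) (a' n) (b (n + 1)) (b' n) (u' (n + 1)))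
        (tailMap (a (n + 1)) (a' n) (b (n + 1)) (b' n) (u' (n + 1))) (u' n) - u n)
      =O[atTop] fun n : ℕ => (n : ℝ) ^ (-s - 2) := by
  have hu'τ : Tendsto (fun n => u' n / n) atTop (𝓝 τ) := by
    have herr := tendsto_zero_of_isBigO_natCast_rpow (by linarith) (isBigO_of_expansion hu')
    have h := hu.add (herr.mul (tendsto_inv_atTop_nhds_zero_nat (𝕜 := ℂ)))
    simp only [mul_zero, add_zero] at h
    exact h.congr fun n => by ring
  have hv := tendsto_succ_div hu
  have hw := tendsto_succ_div hu'τ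
  have hψ := tendsto_tailSlope ha ha' hb hb' hw hD
  refine ⟨eventually_shiftFactor_sub_ne_zero s hψ hμ,
    isBigO_accelerate_sub hs hψ hμ (isBigO_div_tailDenom ha hb hb' hv hD) ?_ hu'⟩
  filter_upwards [htail, eventually_add_ne_zero hb hv hτ, eventually_add_ne_zero hb hw hτ,
    eventually_tailDenom_ne_zero ha hb hb' hv hD, eventually_tailDenom_ne_zero ha hb hb' hw hD]
    with n hn hbv hbw hDv hDw
  rw [hn, tailMap_sub_tailMap hbv hbw hDv hDw]

/-- The convergence-acceleration step for class D̃₂₁ (θ = 2): from tail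
approximations `u'` of order `m/2` the combination
`u'' = (φ' u⁺ − ψ' u')/(φ' − ψ')` gives approximations of order `m/2 + 2`. -/
theorem stmt19 (pm2 pm2' pm1 pm1' p₀ p₀' qm1 qm1' q₀ q₀' : ℂ)
    (hpm2 : pm2 ≠ 0) (hpm2' : pm2' ≠ 0) (hqm1 : qm1 ≠ 0) (hqm1' : qm1' ≠ 0)
    (a a' b b' : ℕ → ℂ)
    (ha : (fun n : ℕ => a (n + 1) - (pm2 * n ^ 2 + pm1 * n + p₀))
      =O[atTop] fun n : ℕ => (n : ℝ) ^ (-(1 : ℝ)))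
    (ha' : (fun n : ℕ => a' n - (pm2' * n ^ 2 + pm1' * n + p₀'))
      =O[atTop] fun n : ℕ => (n : ℝ) ^ (-(1 : ℝ)))
    (hb : (fun n : ℕ => b (n + 1) - (qm1 * n + q₀))
      =O[atTop] fun n : ℕ => (n : ℝ) ^ (-(1 : ℝ)))
    (hb' : (fun n : ℕ => b' n - (qm1' * n + q₀'))
      =O[atTop] fun n : ℕ => (n : ℝ) ^ (-(1 : ℝ)))
    (u : ℕ → ℂ)
    (hne₁ : ∀ n : ℕ, 1 ≤ n → b (n + 1) + u (n + 1) ≠ 0)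
    (hne₂ : ∀ n : ℕ, 1 ≤ n → a (n + 1) + b' n * b (n + 1) + b' n * u (n + 1) ≠ 0)
    (htail : ∀ n : ℕ, 1 ≤ n →
      u n = a' n / (b' n + a (n + 1) / (b (n + 1) + u (n + 1))))
    (τm2 τ0 τ2 : ℂ)
    (hquad : qm1' * τm2 ^ 2 + (pm2 - pm2' + qm1' * qm1) * τm2 - pm2' * qm1 = 0)
    (hz : (pm2 + qm1 * qm1' + qm1' * τm2) ^ 2 ≠ pm2 * pm2')
    (hu : (fun n : ℕ => u n - (τm2 * n + τ0 + τ2 * rpowC (-1) n))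
      =O[atTop] fun n : ℕ => (n : ℝ) ^ (-(2 : ℝ)))
    (m : ℤ) (hm : 2 ≤ m) (c d : ℂ) (u' : ℕ → ℂ)
    (hne₃ : ∀ n : ℕ, 1 ≤ n →
      a (n + 1) + b' n * b (n + 1) + b' n * u' (n + 1) ≠ 0)
    (hu' : (fun n : ℕ => u' n - u n
        - (c * rpowC (-(m : ℝ) / 2) n + d * rpowC (-(m : ℝ) / 2 - 1) n))
      =O[atTop] fun n : ℕ => (n : ℝ) ^ (-(m : ℝ) / 2 - 2)) :
    (∃ N : ℕ, ∀ n : ℕ, N ≤ n →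
        (1 + (m : ℂ) / (2 * n))
          - a' n * a (n + 1)
              / (a (n + 1) + b' n * b (n + 1) + b' n * u' (n + 1)) ^ 2 ≠ 0) ∧
      (fun n : ℕ =>
          ((1 + (m : ℂ) / (2 * n))
              * (a' n / (b' n + a (n + 1) / (b (n + 1) + u' (n + 1))))
            - (a' n * a (n + 1)
                / (a (n + 1) + b' n * b (n + 1) + b' n * u' (n + 1)) ^ 2)
              * u' n)
          / ((1 + (m : ℂ) / (2 * n))
              - a' n * a (n + 1)
                / (a (n + 1) + b' n * b (n + 1) + b' n * u' (n + 1)) ^ 2)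
          - u n)
        =O[atTop] fun n : ℕ => (n : ℝ) ^ (-(m : ℝ) / 2 - 2) := by
  have hu₁ : (fun n : ℕ => u n - (τm2 * n + τ0)) =O[atTop] fun n : ℕ => (n : ℝ) ^ (-1 : ℝ) := by
    have h := (hu.trans (natCast_rpow_isBigO_of_le (by norm_num : (-2 : ℝ) ≤ -1))).add
      ((isBigO_rpowC (-1)).const_mul_left τ2)
    exact h.congr_left fun n => by ring
  have hD := tailDenom_ne_zero_of_quadratic hpm2 hpm2' hqm1 hquad
  have hμ := tailSlope_ne_one_of_sq_ne hD (by simpa only [tailDenom, mul_comm qm1'] using hz)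
  have hs : (1 : ℝ) ≤ m / 2 := (one_le_div two_pos).2 (by exact_mod_cast hm)
  have h := stmt19_general (tendsto_div_sq_of_isBigO_sub_quadratic (by norm_num) ha)
    (tendsto_div_sq_of_isBigO_sub_quadratic (by norm_num) ha')
    (tendsto_div_of_isBigO_sub_linear (by norm_num) hb)
    (tendsto_div_of_isBigO_sub_linear (by norm_num) hb')
    (tendsto_div_of_isBigO_sub_linear (by norm_num) hu₁)
    (add_ne_zero_of_quadratic hpm2 hqm1 hquad) hD hμ (eventually_atTop.2 ⟨1, htail⟩) hs
    (by simpa only [neg_div] using hu')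
  simpa only [shiftFactor, accelerate, tailMap, tailSlope, tailDenom, eventually_atTop, ge_iff_le,
    Complex.ofReal_div, Complex.ofReal_intCast, Complex.ofReal_ofNat, div_div, neg_div] using h
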